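/- arXiv:2512.02903 — 4 statements merged into one kernel-verified Lean document; each statement's English description precedes it below -/
import Mathlib

section
/- For each index i ∈ {1,2,3}, the Poisson bracket of the energy with the i-th component of the Laplace–Runge–Lenz vector vanishes identically: {E, A_i}(r,v) = 0 for all (r,v) with r ≠ 0. -/
/-!
By the triple product identity, `A_i = ‖v‖² r_i - ⟪r, v⟫ v_i - κ r_i / ‖r‖`. Since `∇_v E = v` and
`∇_r E = κ r / ‖r‖³`, the bracket is the derivative of `A_i` in `v` along `κ r / ‖r‖³` minus its
derivative in `r` along `v`. Both equal `κ (r_i ⟪r, v⟫ / ‖r‖³ - v_i / ‖r‖)`.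
-/

noncomputable section

/-- Physical 3-space. -/
abbrev E3 : Type := EuclideanSpace ℝ (Fin 3)

/-- Build a vector in `E3` from its components. -/
def toE3 (f : Fin 3 → ℝ) : E3 := (EuclideanSpace.equiv (Fin 3) ℝ).symm f

/-- Cross product in `ℝ³`. -/
def cross (a b : E3) : E3 :=
  toE3 ![a 1 * b 2 - a 2 * b 1, a 2 * b 0 - a 0 * b 2, a 0 * b 1 - a 1 * b 0]

/-- Dot product in `ℝ³`. -/
def dot (a b : E3) : ℝ := ∑ i, a i * b i

/-- Gradient in the `r` variable of a function on phase space. -/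
def gradR (F : E3 × E3 → ℝ) (p : E3 × E3) : E3 := gradient (fun x => F (x, p.2)) p.1

/-- Gradient in the `v` variable of a function on phase space. -/
def gradV (F : E3 × E3 → ℝ) (p : E3 × E3) : E3 := gradient (fun y => F (p.1, y)) p.2

/-- Poisson bracket of two functions on phase space. -/
def pb (F G : E3 × E3 → ℝ) (p : E3 × E3) : ℝ :=
  dot (gradR F p) (gradV G p) - dot (gradR G p) (gradV F p)

/-- Energy `E(r,v) = (1/2)‖v‖² − κ/‖r‖`. -/
def energy (κ : ℝ) (p : E3 × E3) : ℝ := (1/2) * ‖p.2‖^2 - κ / ‖p.1‖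

/-- Angular momentum `L(r,v) = r × v`. -/
def angMom (p : E3 × E3) : E3 := cross p.1 p.2

/-- Laplace–Runge–Lenz vector `A(r,v) = v × L − κ r/‖r‖`. -/
def lrl (κ : ℝ) (p : E3 × E3) : E3 := cross p.2 (angMom p) - (κ / ‖p.1‖) • p.1

/-- LRL direction vector `Θ = A/‖A‖`. -/
def lrlDir (κ : ℝ) (p : E3 × E3) : E3 := ‖lrl κ p‖⁻¹ • lrl κ p

/-- Levi-Civita symbol `ε_{ijk}` on indices in `{0,1,2}`. -/
def eps (i j k : Fin 3) : ℝ :=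
  (((j : ℕ) : ℝ) - ((i : ℕ) : ℝ)) * (((k : ℕ) : ℝ) - ((i : ℕ) : ℝ))
    * (((k : ℕ) : ℝ) - ((j : ℕ) : ℝ)) / 2

lemma dot_eq_inner (a b : E3) : dot a b = inner ℝ a b := by
  simp [dot, PiLp.inner_apply, mul_comm]

/-- The gradient represents the derivative, so a differentiated formula can be used without
computing the gradient vector itself. -/
lemma dot_gradient {f : E3 → ℝ} {f' : E3 →L[ℝ] ℝ} {x : E3} (h : HasFDerivAt f f' x) (w : E3) :
    dot (gradient f x) w = f' w := by
  rw [dot_eq_inner, gradient, h.fderiv, InnerProductSpace.toDual_symm_apply]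

/-- Component form of `v × (r × v) - κ r / ‖r‖`, with the triple product expanded. -/
lemma lrl_apply (κ : ℝ) (i : Fin 3) (r v : E3) :
    lrl κ (r, v) i = ‖v‖ ^ 2 * r i - inner ℝ r v * v i - κ * (‖r‖⁻¹ * r i) := by
  rw [EuclideanSpace.real_norm_sq_eq]
  fin_cases i <;>
    simp [lrl, angMom, cross, toE3, PiLp.inner_apply, Fin.sum_univ_three] <;> ring

lemma hasFDerivAt_inv_norm {r : E3} (hr : r ≠ 0) :
    HasFDerivAt (fun x : E3 => ‖x‖⁻¹) (-(‖r‖⁻¹ ^ 3) • innerSL ℝ r) r := by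
  have hn : ‖r‖ ≠ 0 := norm_ne_zero_iff.mpr hr
  have h1 : HasFDerivAt (fun x : E3 => √(‖x‖ ^ 2)) _ r :=
    (hasStrictFDerivAt_norm_sq r).hasFDerivAt.sqrt (pow_ne_zero 2 hn)
  simp only [Real.sqrt_sq (norm_nonneg _)] at h1
  refine ((hasDerivAt_inv hn).comp_hasFDerivAt r h1).congr_fderiv ?_
  ext w
  simp
  field_simp

lemma hasFDerivAt_coord (i : Fin 3) (x : E3) :
    HasFDerivAt (fun y : E3 => y i) (EuclideanSpace.proj i : E3 →L[ℝ] ℝ) x :=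
  (EuclideanSpace.proj i : E3 →L[ℝ] ℝ).hasFDerivAt

lemma gradV_energy (κ : ℝ) (r v : E3) : gradV (energy κ) (r, v) = v := by
  apply HasGradientAt.gradient
  rw [hasGradientAt_iff_hasFDerivAt]
  refine (((hasStrictFDerivAt_norm_sq v).hasFDerivAt.const_mul (1 / 2)).sub_const
    (κ / ‖r‖)).congr_fderiv ?_
  ext w
  simp

lemma gradR_energy (κ : ℝ) {r : E3} (hr : r ≠ 0) (v : E3) :
    gradR (energy κ) (r, v) = (κ * ‖r‖⁻¹ ^ 3) • r := by
  apply HasGradientAt.gradient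
  rw [hasGradientAt_iff_hasFDerivAt]
  refine (((hasFDerivAt_inv_norm hr).const_mul κ).const_sub (1 / 2 * ‖v‖ ^ 2)).congr_fderiv ?_
  ext w
  simp [mul_assoc]

lemma dot_gradR_lrl (κ : ℝ) (i : Fin 3) {r : E3} (hr : r ≠ 0) (v : E3) :
    dot (gradR (fun p => lrl κ p i) (r, v)) v =
      κ * (‖r‖⁻¹ ^ 3 * inner ℝ r v * r i - ‖r‖⁻¹ * v i) := by
  simp only [gradR, lrl_apply]
  have hc := hasFDerivAt_coord i r
  refine (dot_gradient (((hc.const_mul (‖v‖ ^ 2)).sub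
    (((hasFDerivAt_id r).inner ℝ (hasFDerivAt_const v r)).mul_const (v i))).sub
      (((hasFDerivAt_inv_norm hr).mul hc).const_mul κ)) v).trans ?_
  simp
  ring

lemma dot_gradV_lrl (κ : ℝ) (i : Fin 3) (r v : E3) :
    dot (gradV (fun p => lrl κ p i) (r, v)) r = inner ℝ r v * r i - ‖r‖ ^ 2 * v i := by
  simp only [gradV, lrl_apply]
  have hc := hasFDerivAt_coord i v
  refine (dot_gradient ((((hasStrictFDerivAt_norm_sq v).hasFDerivAt.mul_const (r i)).sub
    (((hasFDerivAt_const r v).inner ℝ (hasFDerivAt_id v)).mul hc)).sub_const _) r).trans ?_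
  simp [real_inner_comm r v]
  ring

/-- The Poisson bracket of the energy with each component of the LRL vector
vanishes: `{E, A_i}(r,v) = 0` for all `(r,v)` with `r ≠ 0`. -/
theorem poisson_energy_lrl (κ : ℝ) (hκ : 0 < κ) (i : Fin 3)
    (r v : E3) (hr : r ≠ 0) :
    pb (energy κ) (fun p => lrl κ p i) (r, v) = 0 := by
  have hn : ‖r‖ ≠ 0 := norm_ne_zero_iff.mpr hr
  have hsmul : ∀ (c : ℝ) (a b : E3), dot (c • a) b = c * dot b a := fun c a b => by
    rw [dot_eq_inner, dot_eq_inner, real_inner_smul_left, real_inner_comm]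
  rw [pb, gradV_energy, gradR_energy κ hr, hsmul, dot_gradV_lrl, dot_gradR_lrl κ i hr]
  field_simp
  ring
end
end

section
/- Let r : I → ℝ³ be a twice differentiable curve on an interval I with r(t) ≠ 0 for all t ∈ I, satisfying the Kepler equation of motion r''(t) = −κ r(t)/‖r(t)‖³ on I. Then the Laplace–Runge–Lenz vector along the solution, t ↦ r'(t) × ( r(t) × r'(t) ) − κ r(t)/‖r(t)‖, is constant on I. -/
/-!
The LRL vector is constant because its time derivative vanishes identically. Since the force is
central, `r × v` is conserved, so the derivative of `v × (r × v)` is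
`v' × (r × v) = -(κ / ‖r‖³) (r × (r × v)) = (κ / ‖r‖³) (‖r‖² v - ⟨r, v⟩ r)`, which is exactly the
derivative of `κ r / ‖r‖`. The computation is carried out in coordinates
(`lrl_coord_hasDerivAt`, `norm_hasDerivAt`), where it reduces to a polynomial identity modulo
`‖r‖² = r₀² + r₁² + r₂²`. A function with zero derivative on a convex set is constant there.
-/

noncomputable section

lemma norm_sq_coord (x : E3) : ‖x‖ ^ 2 = x 0 ^ 2 + x 1 ^ 2 + x 2 ^ 2 := by
  rw [EuclideanSpace.real_norm_sq_eq, Fin.sum_univ_three]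

/-- Differentiability of a curve in `E3` is checked coordinatewise. -/
lemma hasDerivAt_coord_iff {f : ℝ → E3} {f' : E3} {t : ℝ} :
    HasDerivAt f f' t ↔ ∀ i, HasDerivAt (fun s => f s i) (f' i) t := by
  rw [← hasDerivAt_pi]
  constructor
  · intro h
    exact (EuclideanSpace.equiv (Fin 3) ℝ).hasFDerivAt.comp_hasDerivAt t h
  · intro h
    exact (EuclideanSpace.equiv (Fin 3) ℝ).symm.hasFDerivAt.comp_hasDerivAt t h

lemma norm_hasDerivAt {r : ℝ → E3} {w : E3} {t : ℝ} (h0 : r t ≠ 0) (h : HasDerivAt r w t) :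
    HasDerivAt (fun s => ‖r s‖) ((r t 0 * w 0 + r t 1 * w 1 + r t 2 * w 2) / ‖r t‖) t := by
  have hn : ‖r t‖ ≠ 0 := norm_ne_zero_iff.mpr h0
  have hs := h.norm_sq.sqrt (pow_ne_zero 2 hn)
  simp only [Real.sqrt_sq (norm_nonneg _)] at hs
  convert hs using 1
  rw [PiLp.inner_apply, Fin.sum_univ_three]
  simp only [RCLike.inner_apply, conj_trivial]
  field_simp

/-- The `i`-th coordinate of `v × (r × v) - (κ / ‖r‖) r`, with the double cross product expanded
along the cyclic indices `i, j, k`, has zero derivative at a time where the Kepler equation holds. -/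
lemma lrl_coord_hasDerivAt {κ : ℝ} {r v : ℝ → E3} {t : ℝ} (h0 : r t ≠ 0)
    (hr : HasDerivAt r (v t) t) (hv : HasDerivAt v ((-(κ / ‖r t‖ ^ 3)) • r t) t)
    (i j k : Fin 3) (hsq : ‖r t‖ ^ 2 = r t i ^ 2 + r t j ^ 2 + r t k ^ 2)
    (hdot : r t 0 * v t 0 + r t 1 * v t 1 + r t 2 * v t 2
      = r t i * v t i + r t j * v t j + r t k * v t k) :
    HasDerivAt (fun s => v s j * (r s i * v s j - r s j * v s i)
      - v s k * (r s k * v s i - r s i * v s k) - κ / ‖r s‖ * r s i) 0 t := by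
  have hn : ‖r t‖ ≠ 0 := norm_ne_zero_iff.mpr h0
  have hN := norm_hasDerivAt h0 hr
  rw [hdot] at hN
  have R := hasDerivAt_coord_iff.mp hr
  have V := hasDerivAt_coord_iff.mp hv
  have key := (((V j).mul (((R i).mul (V j)).sub ((R j).mul (V i)))).sub
    ((V k).mul (((R k).mul (V i)).sub ((R i).mul (V k))))).sub
    (((hasDerivAt_const t κ).div hN hn).mul (R i))
  refine key.congr_deriv ?_
  simp only [PiLp.smul_apply, smul_eq_mul, Pi.mul_apply, Pi.sub_apply, Pi.div_apply]
  generalize ‖r t‖ = n at *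
  field_simp
  linear_combination (-(κ * v t i)) * hsq

lemma lrl_hasDerivAt {κ : ℝ} {r v : ℝ → E3} {t : ℝ} (h0 : r t ≠ 0)
    (hr : HasDerivAt r (v t) t) (hv : HasDerivAt v ((-(κ / ‖r t‖ ^ 3)) • r t) t) :
    HasDerivAt (fun s => cross (v s) (cross (r s) (v s)) - (κ / ‖r s‖) • r s) 0 t := by
  have hsq := norm_sq_coord (r t)
  rw [hasDerivAt_coord_iff]
  intro i
  fin_cases i
  · exact lrl_coord_hasDerivAt h0 hr hv 0 1 2 hsq rfl
  · exact lrl_coord_hasDerivAt h0 hr hv 1 2 0 (by rw [hsq]; ring) (by ring)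
  · exact lrl_coord_hasDerivAt h0 hr hv 2 0 1 (by rw [hsq]; ring) (by ring)

/-- Along any twice differentiable solution `r(t)` of the Kepler equation of
motion `r'' = −κ r/‖r‖³` on an interval, with `r(t) ≠ 0`, the LRL vector
`t ↦ r'(t) × (r(t) × r'(t)) − κ r(t)/‖r(t)‖` is constant. -/
theorem lrl_constant_along_solutions (κ : ℝ) (hκ : 0 < κ)
    (I : Set ℝ) (hI : Convex ℝ I) (r v : ℝ → E3)
    (hr0 : ∀ t ∈ I, r t ≠ 0)
    (hderiv : ∀ t ∈ I, HasDerivAt r (v t) t)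
    (heom : ∀ t ∈ I, HasDerivAt v ((-(κ / ‖r t‖^3)) • r t) t) :
    ∀ t₁ ∈ I, ∀ t₂ ∈ I,
      cross (v t₁) (cross (r t₁) (v t₁)) - (κ / ‖r t₁‖) • r t₁
        = cross (v t₂) (cross (r t₂) (v t₂)) - (κ / ‖r t₂‖) • r t₂ := by
  intro t₁ h₁ t₂ h₂
  have h := hI.norm_image_sub_le_of_norm_hasDerivWithin_le (C := 0)
    (fun t ht => (lrl_hasDerivAt (hr0 t ht) (hderiv t ht) (heom t ht)).hasDerivWithinAt)
    (fun t _ => by simp) h₂ h₁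
  rw [zero_mul] at h
  exact sub_eq_zero.mp (norm_le_zero_iff.mp h)
end
end

section
/- For every (r,v) ∈ ℝ³ × ℝ³ with r ≠ 0, the position and velocity vectors admit the following expansion in terms of the LRL vector A and the vector L × A: ‖A‖² r = ( ‖L‖² − κ‖r‖ ) A + (r · v) (L × A), and ‖A‖² v = −κ ‖r‖⁻¹ (r · v) A + ( ‖v‖² − κ ‖r‖⁻¹ ) (L × A). -/
/-! With `s = r · v`, `α = ‖v‖² - κ‖r‖⁻¹` and `β = ‖L‖² - κ‖r‖`, the triple product expansions and
Lagrange's identity `‖L‖² = ‖r‖²‖v‖² - s²` give `A = α r - s v` (`lrl_eq`),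
`L × A = (κ‖r‖⁻¹ s) r + β v` (`cross_angMom_lrl`) and
`‖A‖² = α β + κ‖r‖⁻¹ s²` (`norm_sq_lrl`).
So `‖A‖²` is the determinant of the `2 × 2` matrix expressing `(A, L × A)` in terms of `(r, v)`,
and the two claimed identities are Cramer's rule for that system. -/

noncomputable section

lemma norm_sq_E3 (a : E3) : ‖a‖ ^ 2 = a 0 ^ 2 + a 1 ^ 2 + a 2 ^ 2 := by
  simp [EuclideanSpace.norm_sq_eq, Fin.sum_univ_three]

lemma dot_eq (a b : E3) : dot a b = a 0 * b 0 + a 1 * b 1 + a 2 * b 2 := by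
  simp [dot, Fin.sum_univ_three]

lemma cross_zero_apply (a b : E3) : cross a b 0 = a 1 * b 2 - a 2 * b 1 := rfl

lemma cross_one_apply (a b : E3) : cross a b 1 = a 2 * b 0 - a 0 * b 2 := rfl

lemma cross_two_apply (a b : E3) : cross a b 2 = a 0 * b 1 - a 1 * b 0 := rfl

lemma norm_sq_angMom (r v : E3) :
    ‖angMom (r, v)‖ ^ 2 = ‖r‖ ^ 2 * ‖v‖ ^ 2 - dot r v ^ 2 := by
  simp only [norm_sq_E3, dot_eq, angMom, cross_zero_apply, cross_one_apply, cross_two_apply]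
  ring

lemma lrl_eq (κ : ℝ) (r v : E3) :
    lrl κ (r, v) = (‖v‖ ^ 2 - κ * ‖r‖⁻¹) • r - dot r v • v := by
  ext i
  fin_cases i <;>
  · simp [lrl, angMom, cross_zero_apply, cross_one_apply, cross_two_apply, norm_sq_E3, dot_eq]
    ring

lemma cross_angMom_smul_sub (r v : E3) (a s : ℝ) :
    cross (angMom (r, v)) (a • r - s • v)
      = (s * ‖v‖ ^ 2 - a * dot r v) • r + (a * ‖r‖ ^ 2 - s * dot r v) • v := by
  ext i
  fin_cases i <;>
  · simp [angMom, cross_zero_apply, cross_one_apply, cross_two_apply, norm_sq_E3, dot_eq]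
    ring

lemma norm_sq_smul_sub (r v : E3) (a s : ℝ) :
    ‖a • r - s • v‖ ^ 2 = a ^ 2 * ‖r‖ ^ 2 - 2 * a * s * dot r v + s ^ 2 * ‖v‖ ^ 2 := by
  simp [norm_sq_E3, dot_eq]
  ring

lemma cross_angMom_lrl (κ : ℝ) (r v : E3) (hr : r ≠ 0) :
    cross (angMom (r, v)) (lrl κ (r, v))
      = (κ * ‖r‖⁻¹ * dot r v) • r + (‖angMom (r, v)‖ ^ 2 - κ * ‖r‖) • v := by
  have h : ‖r‖ ≠ 0 := norm_ne_zero_iff.mpr hr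
  rw [lrl_eq, cross_angMom_smul_sub, norm_sq_angMom]
  congr 2
  · ring
  · field_simp
    ring

lemma norm_sq_lrl (κ : ℝ) (r v : E3) (hr : r ≠ 0) :
    ‖lrl κ (r, v)‖ ^ 2
      = (‖v‖ ^ 2 - κ * ‖r‖⁻¹) * (‖angMom (r, v)‖ ^ 2 - κ * ‖r‖)
        + κ * ‖r‖⁻¹ * dot r v ^ 2 := by
  have h : ‖r‖ ≠ 0 := norm_ne_zero_iff.mpr hr
  rw [lrl_eq, norm_sq_smul_sub, norm_sq_angMom]
  field_simp
  ring

/-- Expansion of position and velocity in the basis `{A, L × A}`: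
`‖A‖² r = (‖L‖² − κ‖r‖) A + (r·v)(L × A)` and
`‖A‖² v = −κ‖r‖⁻¹(r·v) A + (‖v‖² − κ‖r‖⁻¹)(L × A)`. -/
theorem position_velocity_expansion (κ : ℝ) (hκ : 0 < κ)
    (r v : E3) (hr : r ≠ 0) :
    ‖lrl κ (r, v)‖^2 • r
        = (‖angMom (r, v)‖^2 - κ * ‖r‖) • lrl κ (r, v)
          + (dot r v) • cross (angMom (r, v)) (lrl κ (r, v)) ∧
    ‖lrl κ (r, v)‖^2 • v
        = (-(κ * ‖r‖⁻¹ * dot r v)) • lrl κ (r, v)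
          + (‖v‖^2 - κ * ‖r‖⁻¹) • cross (angMom (r, v)) (lrl κ (r, v)) := by
  rw [cross_angMom_lrl κ r v hr, norm_sq_lrl κ r v hr, lrl_eq]
  constructor <;> module
end
end

section
/- Let E < 0, set ω = √(−2E), let n ∈ ℝ³ be a unit vector, and let L₀, A₀ ∈ ℝ³; put M₀ = ω⁻¹ A₀. For θ ∈ ℝ and x ∈ ℝ³ let R(θ)x = cos θ · x + (1 − cos θ)(n · x) n + sin θ · (n × x) be the Rodrigues rotation about n. Then the functions L(s) = (1/2) ( R(ωs)(L₀ + M₀) + R(−ωs)(L₀ − M₀) ) and A(s) = (ω/2) ( R(ωs)(L₀ + M₀) − R(−ωs)(L₀ − M₀) ) satisfy L'(s) = n × A(s) and A'(s) = −2E ( n × L(s) ) for all s ∈ ℝ, with L(0) = L₀ and A(0) = A₀; that is, for negative energy the LRL symmetry flow acts on L + M and L − M by independent rotations about n through angles ±ωs. -/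
/-! The generator of the Rodrigues rotation about a unit vector `n` is `x ↦ n × x`:
by `n × (n × x) = (n · x) n − x` one has `d/dθ R(θ)x = n × R(θ)x` (`hasDerivAt_rodrigues`).
Hence `u(s) = R(ωs)(L₀ + M₀)` and `v(s) = R(−ωs)(L₀ − M₀)` satisfy `u' = ω n × u` and
`v' = −ω n × v`. Since `L = (u + v)/2` and `A = ω(u − v)/2`, linearity of the cross product
gives `L' = n × A` and `A' = ω² n × L`, where `ω² = −2E`. -/

noncomputable section

lemma cross_add_right (n x y : E3) : cross n (x + y) = cross n x + cross n y := by
  ext i; fin_cases i <;> simp [cross, toE3] <;> ring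

lemma cross_smul_right (n x : E3) (c : ℝ) : cross n (c • x) = c • cross n x := by
  ext i; fin_cases i <;> simp [cross, toE3] <;> ring

lemma cross_sub_right (n x y : E3) : cross n (x - y) = cross n x - cross n y := by
  ext i; fin_cases i <;> simp [cross, toE3] <;> ring

lemma cross_self_eq_zero (n : E3) : cross n n = 0 := by
  ext i; fin_cases i <;> simp [cross, toE3] <;> ring

lemma cross_cross_of_unit (n x : E3) (hn : ‖n‖ = 1) :
    cross n (cross n x) = dot n x • n - x := by
  have h : n 0 ^ 2 + n 1 ^ 2 + n 2 ^ 2 = 1 := by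
    have h2 := EuclideanSpace.real_norm_sq_eq n
    rw [hn, Fin.sum_univ_three] at h2
    linarith
  ext i
  fin_cases i <;> simp [cross, toE3, dot, Fin.sum_univ_three]
  · linear_combination (-x 0) * h
  · linear_combination (-x 1) * h
  · linear_combination (-x 2) * h

/-- Along `θ = c s`, the Rodrigues rotation `R` about `n` solves `x' = c (n × x)`. -/
lemma hasDerivAt_rodrigues (n : E3) (hn : ‖n‖ = 1) (R : ℝ → E3 → E3)
    (hR : ∀ (θ : ℝ) (x : E3),
      R θ x = Real.cos θ • x + ((1 - Real.cos θ) * dot n x) • n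
                + Real.sin θ • cross n x) (x : E3) (c s : ℝ) :
    HasDerivAt (fun t => R (c * t) x) (c • cross n (R (c * s) x)) s := by
  have hlin : HasDerivAt (fun t : ℝ => c * t) c s := by
    simpa using (hasDerivAt_id s).const_mul c
  have hcos := hlin.cos
  have hsin := hlin.sin
  have h := ((hcos.smul_const x).add
    (((hcos.const_sub 1).mul_const (dot n x)).smul_const n)).add (hsin.smul_const (cross n x))
  simp only [hR]
  refine h.congr_deriv ?_
  simp only [cross_add_right, cross_smul_right, cross_self_eq_zero, cross_cross_of_unit n x hn]
  module

/-- For negative energy, the LRL symmetry flow acts on `L + M` and `L − M`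
(where `M = A/√(−2E)`) by independent Rodrigues rotations about the unit vector
`n` through angles `±ωs`, `ω = √(−2E)`: the stated `L(s)`, `A(s)` solve
`L' = n × A`, `A' = −2E (n × L)` with `L(0) = L₀`, `A(0) = A₀`. -/
theorem lrl_flow_negative_energy (E : ℝ) (hE : E < 0) (n : E3) (hn : ‖n‖ = 1)
    (L₀ A₀ : E3) (ω : ℝ) (hω : ω = Real.sqrt (-2 * E))
    (M₀ : E3) (hM₀ : M₀ = ω⁻¹ • A₀)
    (R : ℝ → E3 → E3)
    (hR : ∀ (θ : ℝ) (x : E3),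
      R θ x = Real.cos θ • x + ((1 - Real.cos θ) * dot n x) • n
                + Real.sin θ • cross n x)
    (L A : ℝ → E3)
    (hLdef : ∀ s : ℝ,
      L s = (1/2 : ℝ) • (R (ω * s) (L₀ + M₀) + R (-(ω * s)) (L₀ - M₀)))
    (hAdef : ∀ s : ℝ,
      A s = (ω / 2) • (R (ω * s) (L₀ + M₀) - R (-(ω * s)) (L₀ - M₀))) :
    (∀ s : ℝ, HasDerivAt L (cross n (A s)) s) ∧
    (∀ s : ℝ, HasDerivAt A ((-2 * E) • cross n (L s)) s) ∧
    L 0 = L₀ ∧ A 0 = A₀ := by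
  have hω0 : ω ≠ 0 := by
    rw [hω]
    exact (Real.sqrt_pos.mpr (by linarith)).ne'
  have hω2 : -2 * E = ω * ω := by
    rw [hω, Real.mul_self_sqrt (by linarith)]
  have hu := hasDerivAt_rodrigues n hn R hR (L₀ + M₀) ω
  have hv : ∀ s, HasDerivAt (fun t => R (-(ω * t)) (L₀ - M₀))
      ((-ω) • cross n (R (-(ω * s)) (L₀ - M₀))) s := by
    intro s
    simpa only [neg_mul] using hasDerivAt_rodrigues n hn R hR (L₀ - M₀) (-ω) s
  have hR0 : ∀ x, R 0 x = x := by
    intro x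
    simp [hR]
  refine ⟨fun s => ?_, fun s => ?_, ?_, ?_⟩
  · rw [funext hLdef, hAdef]
    refine (((hu s).add (hv s)).const_smul (1 / 2 : ℝ)).congr_deriv ?_
    simp only [cross_sub_right, cross_smul_right]
    module
  · rw [funext hAdef, hLdef, hω2]
    refine (((hu s).sub (hv s)).const_smul (ω / 2)).congr_deriv ?_
    simp only [cross_add_right, cross_smul_right]
    module
  · rw [hLdef]
    simp only [mul_zero, neg_zero, hR0]
    module
  · rw [hAdef]
    simp only [mul_zero, neg_zero, hR0]
    have hA : A₀ = ω • M₀ := by rw [hM₀, smul_inv_smul₀ hω0]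
    rw [hA]
    module
end
end
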